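/- (Lemma 1, quadratic case.) Let g(x) = (1/2)xᵀHx + cᵀx with H symmetric positive definite, let E be a real m×n matrix of full row rank m, q ∈ ℝᵐ, and let 0 < α < 1/max{‖E‖₂, ‖EH^{−1/2}‖₂² + ‖H‖₂/4}. Set Θ = [[Iₙ, αEᵀ],[0, (I − α²EEᵀ)^{1/2}]], Q = [[H − αEᵀE, (α/2)HEᵀ],[(α/2)EH, αEEᵀ]], and β = λ_min(Θ^{−T}QΘ^{−1}). Then β > 0 and for any two solutions z₁, z₂ of the primal-dual dynamics ẋ = −Hx − c − Eᵀν, ν̇ = Ex − q, one has ‖Θ(z₁(t) − z₂(t))‖₂ ≤ e^{−βt}‖Θ(z₁(0) − z₂(0))‖₂ for all t ≥ 0; i.e., the primal-dual dynamics is strictly contracting in the metric Θ with rate β. -/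

import Mathlib

open Matrix
open scoped MatrixOrder

/-- The spectral (operator 2-)norm of a real matrix. -/
noncomputable def spectralNorm2 {m n : ℕ} (E : Matrix (Fin m) (Fin n) ℝ) : ℝ :=
  ‖LinearMap.toContinuousLinearMap (Matrix.toEuclideanLin E)‖

/-- The metric transformation `Θ = [[Iₙ, αEᵀ],[0, S]]`, where `S` stands for the positive
semidefinite square root `(I - α²EEᵀ)^{1/2}`. -/
def Theta {n m : ℕ} (E : Matrix (Fin m) (Fin n) ℝ) (α : ℝ)
    (S : Matrix (Fin m) (Fin m) ℝ) : Matrix (Fin n ⊕ Fin m) (Fin n ⊕ Fin m) ℝ :=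
  fromBlocks (1 : Matrix (Fin n) (Fin n) ℝ) (α • Eᵀ) (0 : Matrix (Fin m) (Fin n) ℝ) S

/-- The block matrix `Q = [[H - αEᵀE, (α/2)HEᵀ],[(α/2)EH, αEEᵀ]]`. -/
noncomputable def Qmat {n m : ℕ} (H : Matrix (Fin n) (Fin n) ℝ)
    (E : Matrix (Fin m) (Fin n) ℝ) (α : ℝ) : Matrix (Fin n ⊕ Fin m) (Fin n ⊕ Fin m) ℝ :=
  fromBlocks (H - α • (Eᵀ * E)) ((α / 2) • (H * Eᵀ)) ((α / 2) • (E * H)) (α • (E * Eᵀ))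

/-!
The difference `z` of two solutions obeys the linear equation `ż = A z` with
`A = [[-H, -Eᵀ], [E, 0]]`, and `P = ΘᵀΘ = [[I, αEᵀ], [αE, I]]` satisfies the Lyapunov equation
`PA + AᵀP = -2Q`. Since `β P ≤ Q` by the choice of `β`, Grönwall's inequality makes `zᵀPz` decay
like `e^{-2βt}`. Positivity of `β` is positive definiteness of `Q`: completing the square,
`zᵀQz = xᵀ(H - αEᵀE - (α/4)H²)x + α‖Hx/2 + Eᵀν‖²`, and with `R = H^{1/2}` the first summand is
the form of `I - α(ER⁻¹)ᵀ(ER⁻¹) - (α/4)H` at `Rx`, in which the subtracted matrix has norm `< 1`.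
-/

section Lyapunov

variable {ι : Type*} [Fintype ι]

lemma hasDerivAt_dotProduct {f g : ℝ → ι → ℝ} {f' g' : ι → ℝ} {t : ℝ}
    (hf : HasDerivAt f f' t) (hg : HasDerivAt g g' t) :
    HasDerivAt (fun s => f s ⬝ᵥ g s) (f' ⬝ᵥ g t + f t ⬝ᵥ g') t := by
  rw [hasDerivAt_pi] at hf hg
  simp only [dotProduct, ← Finset.sum_add_distrib]
  exact HasDerivAt.fun_sum fun i _ => (hf i).mul (hg i)

lemma dotProduct_mulVec_le_of_le {A B : Matrix ι ι ℝ} (hAB : A ≤ B) (x : ι → ℝ) :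
    x ⬝ᵥ A *ᵥ x ≤ x ⬝ᵥ B *ᵥ x := by
  have hnonneg := (Matrix.le_iff.1 hAB).dotProduct_mulVec_nonneg x
  rwa [star_trivial, sub_mulVec, dotProduct_sub, sub_nonneg] at hnonneg

lemma le_mul_exp_of_hasDerivAt_le {f f' : ℝ → ℝ} {K : ℝ}
    (hf : ∀ t, 0 ≤ t → HasDerivAt f (f' t) t) (hle : ∀ t, 0 ≤ t → f' t ≤ K * f t)
    {t : ℝ} (ht : 0 ≤ t) : f t ≤ f 0 * Real.exp (K * t) := by
  have hgronwall := le_gronwallBound_of_liminf_deriv_right_le (b := t) (δ := f 0) (ε := 0)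
    (fun s hs => (hf s hs.1).continuousAt.continuousWithinAt)
    (fun s hs _ hr => (hf s hs.1).hasDerivWithinAt.liminf_right_slope_le hr)
    le_rfl (fun s hs => by simpa using hle s hs.1) t ⟨ht, le_rfl⟩
  simpa only [gronwallBound_ε0, sub_zero] using hgronwall

lemma dotProduct_mulVec_le_mul_exp_of_lyapunov {A P : Matrix ι ι ℝ} {β : ℝ}
    (hP : P * A + Aᵀ * P ≤ (-2 * β) • P) {z : ℝ → ι → ℝ}
    (hz : ∀ t, 0 ≤ t → HasDerivAt z (A *ᵥ z t) t) {t : ℝ} (ht : 0 ≤ t) :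
    z t ⬝ᵥ P *ᵥ z t ≤ (z 0 ⬝ᵥ P *ᵥ z 0) * Real.exp (-2 * β * t) := by
  have hPz (s : ℝ) (hs : 0 ≤ s) : HasDerivAt (fun s => P *ᵥ z s) (P *ᵥ A *ᵥ z s) s :=
    P.mulVecLin.toContinuousLinearMap.hasFDerivAt.comp_hasDerivAt s (hz s hs)
  refine le_mul_exp_of_hasDerivAt_le (f := fun s => z s ⬝ᵥ P *ᵥ z s)
    (fun s hs => hasDerivAt_dotProduct (hz s hs) (hPz s hs)) (fun s _ => ?_) ht
  calc A *ᵥ z s ⬝ᵥ P *ᵥ z s + z s ⬝ᵥ P *ᵥ A *ᵥ z s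
      = z s ⬝ᵥ (P * A + Aᵀ * P) *ᵥ z s := by
        rw [add_mulVec, dotProduct_add, ← mulVec_mulVec, ← mulVec_mulVec,
          dotProduct_transpose_mulVec, add_comm, dotProduct_comm (A *ᵥ z s)]
    _ ≤ z s ⬝ᵥ ((-2 * β) • P) *ᵥ z s := dotProduct_mulVec_le_of_le hP _
    _ = -2 * β * (z s ⬝ᵥ P *ᵥ z s) := by rw [smul_mulVec, dotProduct_smul, smul_eq_mul]

lemma mulVec_dotProduct_mulVec_self {κ : Type*} [Fintype κ] (T : Matrix κ ι ℝ) (x : ι → ℝ) :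
    T *ᵥ x ⬝ᵥ T *ᵥ x = x ⬝ᵥ (Tᵀ * T) *ᵥ x := by
  rw [← mulVec_mulVec, dotProduct_transpose_mulVec]

lemma sqrt_mulVec_dotProduct_self_le_exp_mul {A T : Matrix ι ι ℝ} {β : ℝ}
    (hT : Tᵀ * T * A + Aᵀ * (Tᵀ * T) ≤ (-2 * β) • (Tᵀ * T)) {z : ℝ → ι → ℝ}
    (hz : ∀ t, 0 ≤ t → HasDerivAt z (A *ᵥ z t) t) {t : ℝ} (ht : 0 ≤ t) :
    √(T *ᵥ z t ⬝ᵥ T *ᵥ z t) ≤ Real.exp (-β * t) * √(T *ᵥ z 0 ⬝ᵥ T *ᵥ z 0) := by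
  have hexp : Real.exp (-2 * β * t) = Real.exp (-β * t) ^ 2 := by
    rw [← Real.exp_nat_mul]
    ring_nf
  rw [← Real.sqrt_sq (Real.exp_pos (-β * t)).le, ← Real.sqrt_mul (sq_nonneg _), ← hexp,
    mul_comm]
  simp only [mulVec_dotProduct_mulVec_self]
  exact Real.sqrt_le_sqrt (dotProduct_mulVec_le_mul_exp_of_lyapunov hT hz ht)

end Lyapunov

section Eigenvalues

variable {ι : Type*} [Fintype ι] [DecidableEq ι]

lemma iInf_eigenvalues_smul_one_le {M : Matrix ι ι ℝ} (hM : M.IsHermitian) :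
    (⨅ i, hM.eigenvalues i) • (1 : Matrix ι ι ℝ) ≤ M := by
  rw [← Algebra.algebraMap_eq_smul_one]
  refine algebraMap_le_of_le_spectrum (ha := hM) fun r hr => ?_
  rw [hM.spectrum_real_eq_range_eigenvalues] at hr
  obtain ⟨i, rfl⟩ := hr
  exact ciInf_le (Set.finite_range _).bddBelow i

lemma iInf_eigenvalues_pos [Nonempty ι] {M : Matrix ι ι ℝ} (hM : M.PosDef) :
    0 < ⨅ i, hM.isHermitian.eigenvalues i := by
  obtain ⟨i, hi⟩ := exists_eq_ciInf_of_finite (f := hM.isHermitian.eigenvalues)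
  exact hi ▸ hM.eigenvalues_pos i

lemma smul_transpose_mul_self_le_of_smul_one_le {T Q : Matrix ι ι ℝ} (hT : IsUnit T) {β : ℝ}
    (hβ : β • 1 ≤ (T⁻¹)ᵀ * Q * T⁻¹) : β • (Tᵀ * T) ≤ Q := by
  have hdet := (isUnit_iff_isUnit_det T).1 hT
  have hconj := star_left_conjugate_le_conjugate hβ T
  rw [star_eq_conjTranspose, conjTranspose_eq_transpose_of_trivial] at hconj
  calc β • (Tᵀ * T) = Tᵀ * β • 1 * T := by simp
    _ ≤ Tᵀ * ((T⁻¹)ᵀ * Q * T⁻¹) * T := hconj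
    _ = (T⁻¹ * T)ᵀ * Q * (T⁻¹ * T) := by simp only [transpose_mul, Matrix.mul_assoc]
    _ = Q := by rw [nonsing_inv_mul _ hdet, transpose_one, Matrix.one_mul, Matrix.mul_one]

end Eigenvalues

section PositiveDefinite

open scoped Matrix.Norms.L2Operator

variable {ι κ : Type*} [Fintype ι] [Fintype κ] [DecidableEq ι]

lemma spectralNorm2_eq_l2_opNorm {m n : ℕ} (A : Matrix (Fin m) (Fin n) ℝ) :
    spectralNorm2 A = ‖A‖ :=
  rfl

lemma dotProduct_mulVec_le_l2_opNorm_mul (A : Matrix ι ι ℝ) (x : ι → ℝ) :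
    x ⬝ᵥ A *ᵥ x ≤ ‖A‖ * (x ⬝ᵥ x) := by
  set v : EuclideanSpace ℝ ι := WithLp.toLp 2 x
  calc x ⬝ᵥ A *ᵥ x = inner ℝ v (toEuclideanCLM (𝕜 := ℝ) A v) := (inner_toEuclideanCLM A v v).symm
    _ ≤ ‖v‖ * (‖A‖ * ‖v‖) := (real_inner_le_norm _ _).trans <|
        mul_le_mul_of_nonneg_left ((toEuclideanCLM (𝕜 := ℝ) A).le_opNorm v) (norm_nonneg v)
    _ = ‖A‖ * (x ⬝ᵥ x) := by
        rw [mul_left_comm, ← real_inner_self_eq_norm_mul_norm,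
          EuclideanSpace.inner_eq_star_dotProduct, star_trivial]

lemma posDef_one_sub_of_l2_opNorm_lt_one {A : Matrix ι ι ℝ} (hA : A.IsHermitian)
    (hnorm : ‖A‖ < 1) : (1 - A).PosDef := by
  refine .of_dotProduct_mulVec_pos (isHermitian_one.sub hA) fun x hx => ?_
  have hx_pos : 0 < x ⬝ᵥ x := by simpa using dotProduct_star_self_pos_iff.2 hx
  calc (0 : ℝ) < (1 - ‖A‖) * (x ⬝ᵥ x) := mul_pos (sub_pos.2 hnorm) hx_pos
    _ ≤ x ⬝ᵥ x - x ⬝ᵥ A *ᵥ x := by linarith [dotProduct_mulVec_le_l2_opNorm_mul A x]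
    _ = star x ⬝ᵥ (1 - A) *ᵥ x := by rw [star_trivial, sub_mulVec, one_mulVec, dotProduct_sub]

lemma l2_opNorm_transpose_mul_self (F : Matrix κ ι ℝ) : ‖Fᵀ * F‖ = ‖F‖ ^ 2 := by
  rw [← conjTranspose_eq_transpose_of_trivial, l2_opNorm_conjTranspose_mul_self, sq]

lemma posDef_mul_self_sub_smul_sub_smul_of_l2_opNorm {R : Matrix ι ι ℝ} (hR : R.IsHermitian)
    (hRu : IsUnit R) (E : Matrix κ ι ℝ) {α : ℝ} (hα0 : 0 ≤ α)
    (hα : α * (‖E * R⁻¹‖ ^ 2 + ‖R * R‖ / 4) < 1) :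
    (R * R - α • (Eᵀ * E) - (α / 4) • (R * R * (R * R))).PosDef := by
  set F := E * R⁻¹
  set B := α • (Fᵀ * F) + (α / 4) • (R * R)
  have hRt : Rᵀ = R := isHermitian_iff_isSymm.1 hR
  have hB : B.IsHermitian := by
    simp only [isHermitian_iff_isSymm, IsSymm, B, transpose_add, transpose_smul, transpose_mul,
      transpose_transpose, hRt]
  have hBnorm : ‖B‖ < 1 := by
    calc ‖B‖ ≤ ‖α • (Fᵀ * F)‖ + ‖(α / 4) • (R * R)‖ := norm_add_le _ _
      _ = α * (‖F‖ ^ 2 + ‖R * R‖ / 4) := by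
          rw [norm_smul, norm_smul, l2_opNorm_transpose_mul_self, Real.norm_of_nonneg hα0,
            Real.norm_of_nonneg (by positivity)]
          ring
      _ < 1 := hα
  have hFR : F * R = E := by
    rw [Matrix.mul_assoc, nonsing_inv_mul _ ((isUnit_iff_isUnit_det R).1 hRu), Matrix.mul_one]
  have hconj : Rᴴ * (1 - B) * R =
      R * R - α • (Eᵀ * E) - (α / 4) • (R * R * (R * R)) := by
    rw [hR.eq, ← hFR, transpose_mul, hRt]
    simp only [B, Matrix.mul_sub, Matrix.sub_mul, Matrix.mul_add, Matrix.add_mul, Matrix.mul_smul,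
      Matrix.smul_mul, Matrix.mul_one, Matrix.mul_assoc, sub_sub]
  rw [← hconj]
  exact (posDef_one_sub_of_l2_opNorm_lt_one hB hBnorm).conjTranspose_mul_mul_same
    (mulVec_injective_of_isUnit hRu)

lemma l2_opNorm_mul_transpose_self [DecidableEq κ] (F : Matrix ι κ ℝ) :
    ‖F * Fᵀ‖ = ‖F‖ ^ 2 := by
  rw [← l2_opNorm_conjTranspose F, conjTranspose_eq_transpose_of_trivial,
    ← l2_opNorm_transpose_mul_self, transpose_transpose]

lemma isUnit_of_mul_self_eq_one_sub [DecidableEq κ] {S : Matrix ι ι ℝ} {E : Matrix ι κ ℝ} {α : ℝ}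
    (hS : S * S = 1 - α ^ 2 • (E * Eᵀ)) (hα0 : 0 ≤ α) (hα : α * ‖E‖ < 1) : IsUnit S := by
  have hherm : (α ^ 2 • (E * Eᵀ)).IsHermitian := by
    simp [isHermitian_iff_isSymm, IsSymm]
  have hnorm : ‖α ^ 2 • (E * Eᵀ)‖ < 1 := by
    rw [norm_smul, l2_opNorm_mul_transpose_self, Real.norm_of_nonneg (sq_nonneg α), ← mul_pow]
    exact pow_lt_one₀ (mul_nonneg hα0 (norm_nonneg E)) hα two_ne_zero
  have hunit := (posDef_one_sub_of_l2_opNorm_lt_one hherm hnorm).isUnit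
  rw [← hS] at hunit
  exact isUnit_of_mul_isUnit_left hunit

end PositiveDefinite

lemma posDef_fromBlocks_zero_zero {ι κ : Type*} [Finite ι] [Finite κ] {A : Matrix ι ι ℝ}
    {D : Matrix κ κ ℝ} (hA : A.PosDef) (hD : D.PosDef) : (fromBlocks A 0 0 D).PosDef := by
  classical
  have := Fintype.ofFinite ι
  have := Fintype.ofFinite κ
  have := hA.isUnit.invertible
  have hsemi : (fromBlocks A 0 0 D).PosSemidef := by
    simpa using (hA.fromBlocks₁₁ (0 : Matrix ι κ ℝ) D).2 (by simpa using hD.posSemidef)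
  rw [hsemi.posDef_iff_det_ne_zero, det_fromBlocks_zero₂₁]
  exact mul_ne_zero hA.det_pos.ne' hD.det_pos.ne'

lemma mulVec_injective_of_rank_eq_card {ι κ K : Type*} [Fintype κ] [Finite ι] [Field K]
    {A : Matrix ι κ K} (hA : A.rank = Fintype.card κ) : Function.Injective A.mulVec := by
  change Function.Injective A.mulVecLin
  have hrank_nullity := A.mulVecLin.finrank_range_add_finrank_ker
  rw [← Matrix.rank, hA, Module.finrank_fintype_fun_eq_card] at hrank_nullity
  rw [← LinearMap.ker_eq_bot, ← Submodule.finrank_eq_zero (R := K)]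
  lia

section PrimalDual

variable {n m : ℕ}

/-- The matrix `[[-H, -Eᵀ], [E, 0]]` of the linear part of the primal-dual dynamics
`ẋ = -Hx - c - Eᵀν`, `ν̇ = Ex - q`; it governs the difference of two solutions. -/
def primalDualMatrix (H : Matrix (Fin n) (Fin n) ℝ) (E : Matrix (Fin m) (Fin n) ℝ) :
    Matrix (Fin n ⊕ Fin m) (Fin n ⊕ Fin m) ℝ :=
  fromBlocks (-H) (-Eᵀ) E 0

lemma hasDerivAt_sub_primalDual {H : Matrix (Fin n) (Fin n) ℝ} {E : Matrix (Fin m) (Fin n) ℝ}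
    {c : Fin n → ℝ} {q : Fin m → ℝ} {x₁ x₂ : ℝ → Fin n → ℝ} {ν₁ ν₂ : ℝ → Fin m → ℝ} {t : ℝ}
    (hx₁ : HasDerivAt x₁ (-(H *ᵥ x₁ t) - c - Eᵀ *ᵥ ν₁ t) t)
    (hν₁ : HasDerivAt ν₁ (E *ᵥ x₁ t - q) t)
    (hx₂ : HasDerivAt x₂ (-(H *ᵥ x₂ t) - c - Eᵀ *ᵥ ν₂ t) t)
    (hν₂ : HasDerivAt ν₂ (E *ᵥ x₂ t - q) t) :
    HasDerivAt (fun s => Sum.elim (x₁ s - x₂ s) (ν₁ s - ν₂ s))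
      (primalDualMatrix H E *ᵥ Sum.elim (x₁ t - x₂ t) (ν₁ t - ν₂ t)) t := by
  have hderiv : primalDualMatrix H E *ᵥ Sum.elim (x₁ t - x₂ t) (ν₁ t - ν₂ t) =
      Sum.elim (-(H *ᵥ x₁ t) - c - Eᵀ *ᵥ ν₁ t - (-(H *ᵥ x₂ t) - c - Eᵀ *ᵥ ν₂ t))
        (E *ᵥ x₁ t - q - (E *ᵥ x₂ t - q)) := by
    rw [primalDualMatrix, fromBlocks_mulVec, Sum.elim_comp_inl, Sum.elim_comp_inr]
    simp only [neg_mulVec, mulVec_sub, zero_mulVec]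
    congr 1 <;> abel
  rw [hderiv, hasDerivAt_pi]
  rintro (i | j)
  · exact hasDerivAt_pi.1 (hx₁.fun_sub hx₂) i
  · exact hasDerivAt_pi.1 (hν₁.fun_sub hν₂) j

variable {H : Matrix (Fin n) (Fin n) ℝ} {E : Matrix (Fin m) (Fin n) ℝ} {α : ℝ}
  {S : Matrix (Fin m) (Fin m) ℝ}

lemma transpose_Theta_mul_Theta (hS : S.IsHermitian) (hSsq : S * S = 1 - α ^ 2 • (E * Eᵀ)) :
    (Theta E α S)ᵀ * Theta E α S = fromBlocks 1 (α • Eᵀ) (α • E) 1 := by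
  have hSt : Sᵀ = S := isHermitian_iff_isSymm.1 hS
  simp [Theta, fromBlocks_transpose, fromBlocks_multiply, hSt, hSsq, smul_smul, ← sq]

lemma Theta_lyapunov_equation (hH : H.IsHermitian) (hS : S.IsHermitian)
    (hSsq : S * S = 1 - α ^ 2 • (E * Eᵀ)) :
    (Theta E α S)ᵀ * Theta E α S * primalDualMatrix H E +
      (primalDualMatrix H E)ᵀ * ((Theta E α S)ᵀ * Theta E α S) = (-2 : ℝ) • Qmat H E α := by
  have hHt : Hᵀ = H := isHermitian_iff_isSymm.1 hH
  rw [transpose_Theta_mul_Theta hS hSsq, primalDualMatrix, Qmat, fromBlocks_transpose,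
    fromBlocks_multiply, fromBlocks_multiply, fromBlocks_add, fromBlocks_smul, fromBlocks_inj]
  simp only [transpose_neg, transpose_transpose, transpose_zero, hHt, Matrix.mul_neg,
    Matrix.neg_mul, Matrix.smul_mul, Matrix.mul_smul, Matrix.one_mul, Matrix.mul_one,
    Matrix.mul_zero, Matrix.zero_mul]
  refine ⟨?_, ?_, ?_, ?_⟩ <;> module

lemma isUnit_Theta (hS : IsUnit S) : IsUnit (Theta E α S) := by
  rw [isUnit_iff_isUnit_det, Theta, det_fromBlocks_zero₂₁, det_one, one_mul]
  exact (isUnit_iff_isUnit_det S).1 hS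

/-- The map `(x, ν) ↦ (x, Hx/2 + Eᵀν)`, which block-diagonalizes `Qmat H E α` by completing the
square. -/
noncomputable def squareCompletion (H : Matrix (Fin n) (Fin n) ℝ) (E : Matrix (Fin m) (Fin n) ℝ) :
    Matrix (Fin n ⊕ Fin n) (Fin n ⊕ Fin m) ℝ :=
  fromBlocks 1 0 ((1 / 2 : ℝ) • H) Eᵀ

lemma squareCompletion_mulVec_injective (hE : Function.Injective Eᵀ.mulVec) :
    Function.Injective (squareCompletion H E).mulVec := by
  change Function.Injective (squareCompletion H E).mulVecLin
  rw [injective_iff_map_eq_zero]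
  intro z hz
  rw [mulVecLin_apply, squareCompletion, fromBlocks_mulVec] at hz
  have hx : z ∘ Sum.inl = 0 := by simpa using congrArg (· ∘ Sum.inl) hz
  have hν : Eᵀ *ᵥ (z ∘ Sum.inr) = 0 := by simpa [hx] using congrArg (· ∘ Sum.inr) hz
  rw [← Sum.elim_comp_inl_inr z, hx, hE (hν.trans (mulVec_zero _).symm)]
  exact Sum.elim_zero_zero

lemma transpose_squareCompletion_mul_mul (hH : H.IsHermitian) :
    (squareCompletion H E)ᵀ *
        fromBlocks (H - α • (Eᵀ * E) - (α / 4) • (H * H)) 0 0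
          (α • (1 : Matrix (Fin n) (Fin n) ℝ)) * squareCompletion H E =
      Qmat H E α := by
  have hHt : Hᵀ = H := isHermitian_iff_isSymm.1 hH
  rw [Qmat, squareCompletion, fromBlocks_transpose, fromBlocks_multiply, fromBlocks_multiply,
    fromBlocks_inj]
  simp only [transpose_one, transpose_zero, transpose_smul, transpose_transpose, hHt,
    Matrix.smul_mul, Matrix.mul_smul, Matrix.one_mul, Matrix.mul_one, Matrix.mul_zero,
    Matrix.zero_mul, add_zero, zero_add, and_true]
  refine ⟨?_, ?_, ?_⟩ <;> module

lemma posDef_sub_smul_transpose_mul_self_sub_smul_mul_self (hH : H.PosDef) (hα0 : 0 ≤ α)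
    (hα : α * (spectralNorm2 (E * (CFC.sqrt H)⁻¹) ^ 2 + spectralNorm2 H / 4) < 1) :
    (H - α • (Eᵀ * E) - (α / 4) • (H * H)).PosDef := by
  have hRR : CFC.sqrt H * CFC.sqrt H = H := CFC.sqrt_mul_sqrt_self H hH.posSemidef.nonneg
  have hR : (CFC.sqrt H).IsHermitian := (CFC.sqrt_nonneg H).posSemidef.isHermitian
  have hRu : IsUnit (CFC.sqrt H) := isUnit_of_mul_isUnit_left (hRR.symm ▸ hH.isUnit)
  rw [spectralNorm2_eq_l2_opNorm, spectralNorm2_eq_l2_opNorm] at hα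
  simpa only [hRR] using
    posDef_mul_self_sub_smul_sub_smul_of_l2_opNorm hR hRu E hα0 (by rwa [hRR])

lemma posDef_Qmat (hH : H.PosDef) (hE : E.rank = m) (hα0 : 0 < α)
    (hα : α * (spectralNorm2 (E * (CFC.sqrt H)⁻¹) ^ 2 + spectralNorm2 H / 4) < 1) :
    (Qmat H E α).PosDef := by
  have hEt : Function.Injective Eᵀ.mulVec :=
    mulVec_injective_of_rank_eq_card (by rw [rank_transpose, hE, Fintype.card_fin])
  have hdiag := posDef_fromBlocks_zero_zero
    (posDef_sub_smul_transpose_mul_self_sub_smul_mul_self hH hα0.le hα)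
    (PosDef.one.smul hα0 : (α • (1 : Matrix (Fin n) (Fin n) ℝ)).PosDef)
  rw [← transpose_squareCompletion_mul_mul hH.isHermitian, ← conjTranspose_eq_transpose_of_trivial]
  exact hdiag.conjTranspose_mul_mul_same (squareCompletion_mulVec_injective hEt)

lemma sqrt_Theta_sub_le_exp_mul (hH : H.IsHermitian) (hS : S.IsHermitian)
    (hSsq : S * S = 1 - α ^ 2 • (E * Eᵀ)) (hSu : IsUnit S) {β : ℝ}
    (hβ : β • 1 ≤ ((Theta E α S)⁻¹)ᵀ * Qmat H E α * (Theta E α S)⁻¹)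
    {c : Fin n → ℝ} {q : Fin m → ℝ} {x₁ x₂ : ℝ → Fin n → ℝ} {ν₁ ν₂ : ℝ → Fin m → ℝ}
    (hx₁ : ∀ t, 0 ≤ t → HasDerivAt x₁ (-(H *ᵥ x₁ t) - c - Eᵀ *ᵥ ν₁ t) t)
    (hν₁ : ∀ t, 0 ≤ t → HasDerivAt ν₁ (E *ᵥ x₁ t - q) t)
    (hx₂ : ∀ t, 0 ≤ t → HasDerivAt x₂ (-(H *ᵥ x₂ t) - c - Eᵀ *ᵥ ν₂ t) t)
    (hν₂ : ∀ t, 0 ≤ t → HasDerivAt ν₂ (E *ᵥ x₂ t - q) t) {t : ℝ} (ht : 0 ≤ t) :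
    √((Theta E α S *ᵥ Sum.elim (x₁ t - x₂ t) (ν₁ t - ν₂ t)) ⬝ᵥ
        (Theta E α S *ᵥ Sum.elim (x₁ t - x₂ t) (ν₁ t - ν₂ t))) ≤
      Real.exp (-β * t) * √((Theta E α S *ᵥ Sum.elim (x₁ 0 - x₂ 0) (ν₁ 0 - ν₂ 0)) ⬝ᵥ
        (Theta E α S *ᵥ Sum.elim (x₁ 0 - x₂ 0) (ν₁ 0 - ν₂ 0))) := by
  have hβQ := smul_transpose_mul_self_le_of_smul_one_le (isUnit_Theta hSu) hβ
  refine sqrt_mulVec_dotProduct_self_le_exp_mul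
    (z := fun s => Sum.elim (x₁ s - x₂ s) (ν₁ s - ν₂ s)) ?_
    (fun s hs => hasDerivAt_sub_primalDual (hx₁ s hs) (hν₁ s hs) (hx₂ s hs) (hν₂ s hs)) ht
  rw [Theta_lyapunov_equation hH hS hSsq, mul_smul]
  exact smul_le_smul_of_nonpos_left hβQ (by norm_num)

lemma spectralNorm2_eq_zero_of_isEmpty [IsEmpty (Fin n)] (A : Matrix (Fin m) (Fin n) ℝ) :
    spectralNorm2 A = 0 := by
  rw [spectralNorm2, Subsingleton.elim (toEuclideanLin A) 0, map_zero, norm_zero]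

end PrimalDual

/-- **Lemma 1, quadratic case.** For the quadratic objective
`g(x) = (1/2)xᵀHx + cᵀx` with `H` symmetric positive definite, `E` of full row rank, and
`0 < α < 1/max{‖E‖₂, ‖EH^{-1/2}‖₂² + ‖H‖₂/4}`, with `Θ = [[I, αEᵀ],[0, (I - α²EEᵀ)^{1/2}]]`
and `β = λ_min(Θ⁻ᵀQΘ⁻¹)`, one has `β > 0` and the primal-dual dynamics is strictly
contracting in the metric `Θ` with rate `β`:
`‖Θ(z₁(t) - z₂(t))‖₂ ≤ e^{-βt}‖Θ(z₁(0) - z₂(0))‖₂` for all `t ≥ 0`. -/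
theorem stmt7 {n m : ℕ} (H : Matrix (Fin n) (Fin n) ℝ) (hH : H.PosDef)
    (c : Fin n → ℝ) (E : Matrix (Fin m) (Fin n) ℝ) (q : Fin m → ℝ)
    (hrank : E.rank = m) (α : ℝ) (hα0 : 0 < α)
    (hα : α < 1 / max (spectralNorm2 E)
        (spectralNorm2 (E * (CFC.sqrt H)⁻¹) ^ 2 + spectralNorm2 H / 4))
    (S : Matrix (Fin m) (Fin m) ℝ) (hS : S.PosSemidef)
    (hSsq : S * S = 1 - α ^ 2 • (E * Eᵀ))
    (hM : (((Theta E α S)⁻¹)ᵀ * Qmat H E α * (Theta E α S)⁻¹).IsHermitian)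
    (β : ℝ) (hβ : β = ⨅ i, hM.eigenvalues i) :
    0 < β ∧
    ∀ (x₁ x₂ : ℝ → Fin n → ℝ) (ν₁ ν₂ : ℝ → Fin m → ℝ),
      (∀ t, HasDerivAt x₁ (-(H *ᵥ x₁ t) - c - Eᵀ *ᵥ ν₁ t) t) →
      (∀ t, HasDerivAt ν₁ (E *ᵥ x₁ t - q) t) →
      (∀ t, HasDerivAt x₂ (-(H *ᵥ x₂ t) - c - Eᵀ *ᵥ ν₂ t) t) →
      (∀ t, HasDerivAt ν₂ (E *ᵥ x₂ t - q) t) →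
      ∀ t : ℝ, 0 ≤ t →
        Real.sqrt ((Theta E α S *ᵥ Sum.elim (x₁ t - x₂ t) (ν₁ t - ν₂ t)) ⬝ᵥ
            (Theta E α S *ᵥ Sum.elim (x₁ t - x₂ t) (ν₁ t - ν₂ t))) ≤
          Real.exp (-β * t) *
            Real.sqrt ((Theta E α S *ᵥ Sum.elim (x₁ 0 - x₂ 0) (ν₁ 0 - ν₂ 0)) ⬝ᵥ
              (Theta E α S *ᵥ Sum.elim (x₁ 0 - x₂ 0) (ν₁ 0 - ν₂ 0))) := by
  have hmax : 0 < max (spectralNorm2 E)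
      (spectralNorm2 (E * (CFC.sqrt H)⁻¹) ^ 2 + spectralNorm2 H / 4) :=
    one_div_pos.1 (hα0.trans hα)
  have hn : Nonempty (Fin n) := by
    by_contra! hempty
    simp [spectralNorm2_eq_zero_of_isEmpty] at hmax
  rw [lt_div_iff₀ hmax, mul_max_of_nonneg _ _ hα0.le, max_lt_iff] at hα
  obtain ⟨hαE, hαH⟩ := hα
  have hSu : IsUnit S :=
    isUnit_of_mul_self_eq_one_sub hSsq hα0.le (spectralNorm2_eq_l2_opNorm E ▸ hαE)
  have hMpos := (posDef_Qmat hH hrank hα0 hαH).conjTranspose_mul_mul_same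
    (mulVec_injective_of_isUnit (isUnit_nonsing_inv_iff.2 (isUnit_Theta (E := E) (α := α) hSu)))
  refine ⟨hβ ▸ iInf_eigenvalues_pos hMpos, fun x₁ x₂ ν₁ ν₂ hx₁ hν₁ hx₂ hν₂ t ht => ?_⟩
  exact sqrt_Theta_sub_le_exp_mul hH.isHermitian hS.isHermitian hSsq hSu
    (hβ ▸ iInf_eigenvalues_smul_one_le hM) (fun s _ => hx₁ s) (fun s _ => hν₁ s)
    (fun s _ => hx₂ s) (fun s _ => hν₂ s) ht
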